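/- Let f : ℝ² → ℝ² be smooth with Df(u) strictly hyperbolic (two distinct real eigenvalues λ₁(u) < λ₂(u)) near u = 0, written in Riemann coordinates (w₁, w₂) so that smooth solutions satisfy w_{i,t} + λᵢ(w₁,w₂) w_{i,x} = 0. Then there exists a smooth flux f̃ defined near 0, whose associated 2×2 system is of Temple class (integral curves of both eigenvector fields are straight lines) and whose eigenvalues μ₁, μ₂ in the same Riemann coordinates satisfy μᵢ(0,0) = λᵢ(0,0) and ∂μᵢ/∂w_j(0,0) = ∂λᵢ/∂w_j(0,0) for all i, j ∈ {1,2}. -/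

import Mathlib

/-- The two coordinate directions in the plane of Riemann coordinates. -/
def rc : Fin 2 → ℝ × ℝ := ![(1, 0), (0, 1)]

/-!
Decoupled scalar laws `∂ₜ wᵢ + ∂ₓ φᵢ(wᵢ) = 0` trivially form a Temple system. If `ℓ` is linear, then
`D = 1 + ℓ w` is a conserved density with flux `K = ∑ᵢ ℓ(eᵢ) φᵢ(wᵢ)`, so the reciprocal
transformation `dX = D dx - K dt` is a legitimate change of the space variable. It turns the state
into `w / D`, a projective map and hence one that preserves straight lines, and the speeds into
`μᵢ = D φᵢ' - K`. At the origin, if `φᵢ(t) = aᵢ t + bᵢ t² / 2`, one finds `μᵢ = aᵢ` and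
`∂ⱼμᵢ = (aᵢ - aⱼ) ℓ(eⱼ) + δᵢⱼ bᵢ`. For two distinct speeds, the two numbers `ℓ(eⱼ)` and the two
numbers `bᵢ` therefore realise an arbitrary gradient of each speed.
-/

open Module (Basis)
open scoped ContDiff Topology

section Reciprocal

variable {V : Type*} [NormedAddCommGroup V] [NormedSpace ℝ V] (ℓ : V →L[ℝ] ℝ)

/-- The conserved state after the reciprocal transformation `dX = (1 + ℓ w) dx - ℓ (Φ w) dt`. It
does not depend on the flux `Φ`, and is the projective transformation sending the hyperplane
`1 + ℓ w = 0` to infinity (on that hyperplane its value is the junk value `0`). -/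
noncomputable def reciprocalState (w : V) : V := (1 + ℓ w)⁻¹ • w

/-- The flux, as a function of the old state `w`, after the reciprocal transformation
`dX = (1 + ℓ w) dx - ℓ (Φ w) dt` of the system `∂ₜ w + ∂ₓ Φ(w) = 0`. -/
noncomputable def reciprocalFlux (Φ : V → V) (w : V) : V := Φ w - ℓ (Φ w) • reciprocalState ℓ w

/-- The speed, with respect to `dX = (1 + ℓ w) dx - ℓ (Φ w) dt`, of a wave which travels with
speed `m w` in the variable `x`. -/
def reciprocalSpeed (Φ : V → V) (m : V → ℝ) (w : V) : ℝ := (1 + ℓ w) * m w - ℓ (Φ w)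

variable {ℓ} {Φ : V → V} {Φ' : V →L[ℝ] V} {m : V → ℝ} {v w : V}

lemma map_reciprocalState (hw : 1 + ℓ w ≠ 0) : ℓ (reciprocalState ℓ w) = 1 - (1 + ℓ w)⁻¹ := by
  simp only [reciprocalState, map_smul, smul_eq_mul]
  field_simp
  ring

lemma reciprocalState_neg_reciprocalState (hw : 1 + ℓ w ≠ 0) :
    reciprocalState (-ℓ) (reciprocalState ℓ w) = w := by
  have hD : 1 + (-ℓ) (reciprocalState ℓ w) = (1 + ℓ w)⁻¹ := by
    rw [neg_apply, map_reciprocalState hw]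
    ring
  rw [reciprocalState, hD, inv_inv, reciprocalState, smul_inv_smul₀ hw]

lemma injOn_reciprocalState : Set.InjOn (reciprocalState ℓ) {w | 1 + ℓ w ≠ 0} :=
  Set.LeftInvOn.injOn fun _ hw => reciprocalState_neg_reciprocalState hw

lemma contDiffOn_reciprocalState {n : ℕ∞ω} :
    ContDiffOn ℝ n (reciprocalState ℓ) {w | 1 + ℓ w ≠ 0} :=
  ((contDiff_const.add ℓ.contDiff).contDiffOn.inv fun _ hw => hw).smul contDiffOn_id

lemma hasFDerivAt_inv_one_add (hw : 1 + ℓ w ≠ 0) :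
    HasFDerivAt (fun z => (1 + ℓ z)⁻¹) (-((1 + ℓ w) ^ 2)⁻¹ • ℓ) w :=
  (hasDerivAt_inv hw).comp_hasFDerivAt w (ℓ.hasFDerivAt.const_add 1)

lemma differentiableAt_reciprocalState (hw : 1 + ℓ w ≠ 0) :
    DifferentiableAt ℝ (reciprocalState ℓ) w :=
  (hasFDerivAt_inv_one_add hw).differentiableAt.smul differentiableAt_id

lemma fderiv_reciprocalState_apply (hw : 1 + ℓ w ≠ 0) (v : V) :
    fderiv ℝ (reciprocalState ℓ) w v = (1 + ℓ w)⁻¹ • (v - ℓ v • reciprocalState ℓ w) := by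
  have h : HasFDerivAt (reciprocalState ℓ) _ w :=
    (hasFDerivAt_inv_one_add hw).smul (hasFDerivAt_id w)
  rw [h.fderiv]
  simp only [reciprocalState, add_apply, smul_apply,
    ContinuousLinearMap.smulRight_apply, ContinuousLinearMap.id_apply, smul_eq_mul]
  match_scalars <;> field_simp

lemma fderiv_reciprocalState_apply_ne_zero (hw : 1 + ℓ w ≠ 0) (hv : v ≠ 0) :
    fderiv ℝ (reciprocalState ℓ) w v ≠ 0 := by
  rw [fderiv_reciprocalState_apply hw]
  refine smul_ne_zero (inv_ne_zero hw) fun h => hv ?_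
  have hv_eq : v = ℓ v • reciprocalState ℓ w := sub_eq_zero.mp h
  have hℓ : ℓ v * (1 + ℓ w)⁻¹ = 0 := by
    have := congrArg ℓ hv_eq
    rw [map_smul, map_reciprocalState hw, smul_eq_mul] at this
    linarith
  rw [hv_eq, (mul_eq_zero_iff_right (inv_ne_zero hw)).mp hℓ, zero_smul]

lemma fderiv_fderiv_reciprocalState_apply (hw : 1 + ℓ w ≠ 0) (v : V) :
    fderiv ℝ (fun z => fderiv ℝ (reciprocalState ℓ) z v) w v =
      (-2 * ℓ v / (1 + ℓ w)) • fderiv ℝ (reciprocalState ℓ) w v := by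
  have hnhds : ∀ᶠ z in 𝓝 w, 1 + ℓ z ≠ 0 :=
    (continuous_const.add ℓ.continuous).continuousAt.eventually_ne hw
  have heq : (fun z => fderiv ℝ (reciprocalState ℓ) z v) =ᶠ[𝓝 w]
      fun z => (1 + ℓ z)⁻¹ • (v - ℓ v • reciprocalState ℓ z) :=
    hnhds.mono fun z hz => fderiv_reciprocalState_apply hz v
  have h : HasFDerivAt (fun z => (1 + ℓ z)⁻¹ • (v - ℓ v • reciprocalState ℓ z)) _ w :=
    (hasFDerivAt_inv_one_add hw).smul <|
      ((differentiableAt_reciprocalState hw).hasFDerivAt.const_smul (ℓ v)).const_sub v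
  rw [heq.fderiv_eq, h.fderiv]
  simp only [add_apply, smul_apply, neg_apply, ContinuousLinearMap.smulRight_apply, smul_eq_mul,
    fderiv_reciprocalState_apply hw]
  match_scalars <;> field_simp <;> ring

lemma fderiv_reciprocalFlux_apply (hw : 1 + ℓ w ≠ 0) (hΦ : DifferentiableAt ℝ Φ w)
    (hv : fderiv ℝ Φ w v = m w • v) :
    fderiv ℝ (reciprocalFlux ℓ Φ) w v =
      reciprocalSpeed ℓ Φ m w • fderiv ℝ (reciprocalState ℓ) w v := by
  have h : HasFDerivAt (reciprocalFlux ℓ Φ) _ w :=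
    hΦ.hasFDerivAt.sub ((ℓ.hasFDerivAt.comp w hΦ.hasFDerivAt).smul
      (differentiableAt_reciprocalState hw).hasFDerivAt)
  rw [h.fderiv]
  simp only [sub_apply, add_apply, smul_apply, ContinuousLinearMap.smulRight_apply,
    ContinuousLinearMap.comp_apply, Function.comp_apply, hv, map_smul, smul_eq_mul,
    reciprocalSpeed, fderiv_reciprocalState_apply hw]
  match_scalars <;> field_simp
  ring

lemma hasFDerivAt_reciprocalSpeed {m' : V →L[ℝ] ℝ} (hΦ : HasFDerivAt Φ Φ' w)
    (hm : HasFDerivAt m m' w) :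
    HasFDerivAt (reciprocalSpeed ℓ Φ m) ((1 + ℓ w) • m' + m w • ℓ - ℓ ∘L Φ') w :=
  ((ℓ.hasFDerivAt.const_add 1).mul hm).sub (ℓ.hasFDerivAt.comp w hΦ)

end Reciprocal

section Temple

variable {ι V : Type*} [Preorder ι] [NormedAddCommGroup V] [NormedSpace ℝ V]

/-- On the open set `U`, the functions `u` (conserved state) and `g` (flux) of the Riemann
coordinates describe a strictly hyperbolic system of Temple class with characteristic speeds `mu`.
The directions `e i` are those of the coordinate axes. The condition `∂g/∂wᵢ = μᵢ ∂u/∂wᵢ` says that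
`∂u/∂wᵢ` is an eigenvector of the Jacobian of the flux, as a function of the state, and
`straight` says that its integral curves are straight lines. -/
structure IsTempleSystemOn (e : ι → V) (u g : V → V) (mu : ι → V → ℝ) (U : Set V) : Prop where
  isOpen : IsOpen U
  contDiffOn_state : ContDiffOn ℝ ∞ u U
  contDiffOn_flux : ContDiffOn ℝ ∞ g U
  contDiffOn_speed : ∀ i, ContDiffOn ℝ ∞ (mu i) U
  injOn_state : Set.InjOn u U
  strictMono_speed : ∀ w ∈ U, StrictMono fun i => mu i w
  fderiv_state_ne_zero : ∀ w ∈ U, ∀ i, fderiv ℝ u w (e i) ≠ 0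
  fderiv_flux : ∀ w ∈ U, ∀ i, fderiv ℝ g w (e i) = mu i w • fderiv ℝ u w (e i)
  straight : ∀ w ∈ U, ∀ i, ∃ κ : ℝ,
    fderiv ℝ (fun z => fderiv ℝ u z (e i)) w (e i) = κ • fderiv ℝ u w (e i)

lemma isOpen_setOf_strictMono [Finite ι] {X : Type*} [TopologicalSpace X] {f : ι → X → ℝ}
    (hf : ∀ i, Continuous (f i)) : IsOpen {x | StrictMono fun i => f i x} := by
  simp only [StrictMono, Set.ofPred_forall]
  exact isOpen_iInter_of_finite fun i => isOpen_iInter_of_finite fun j =>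
    isOpen_iInter_of_finite fun _ => isOpen_lt (hf i) (hf j)

theorem isTempleSystemOn_reciprocal [Finite ι] {e : ι → V} {Φ : V → V} {m : ι → V → ℝ}
    (ℓ : V →L[ℝ] ℝ) (he : ∀ i, e i ≠ 0) (hΦ : ContDiff ℝ ∞ Φ) (hm : ∀ i, ContDiff ℝ ∞ (m i))
    (hΦe : ∀ w i, fderiv ℝ Φ w (e i) = m i w • e i) :
    IsTempleSystemOn e (reciprocalState ℓ) (reciprocalFlux ℓ Φ) (fun i => reciprocalSpeed ℓ Φ (m i))
      {w | 1 + ℓ w ≠ 0 ∧ StrictMono fun i => reciprocalSpeed ℓ Φ (m i) w} := by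
  have hspeed (i : ι) : ContDiff ℝ ∞ (reciprocalSpeed ℓ Φ (m i)) :=
    ((contDiff_const.add ℓ.contDiff).mul (hm i)).sub (ℓ.contDiff.comp hΦ)
  have hstate := (contDiffOn_reciprocalState (ℓ := ℓ) (n := ∞)).mono
    fun w (hw : 1 + ℓ w ≠ 0 ∧ StrictMono fun i => reciprocalSpeed ℓ Φ (m i) w) => hw.1
  exact
  { isOpen := (isOpen_ne_fun (continuous_const.add ℓ.continuous) continuous_const).inter
      (isOpen_setOf_strictMono fun i => (hspeed i).continuous)
    contDiffOn_state := hstate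
    contDiffOn_flux := hΦ.contDiffOn.sub ((ℓ.contDiff.comp hΦ).contDiffOn.smul hstate)
    contDiffOn_speed := fun i => (hspeed i).contDiffOn
    injOn_state := injOn_reciprocalState.mono fun _ hw => hw.1
    strictMono_speed := fun _ hw => hw.2
    fderiv_state_ne_zero := fun _ hw i => fderiv_reciprocalState_apply_ne_zero hw.1 (he i)
    fderiv_flux := fun w hw i => fderiv_reciprocalFlux_apply hw.1
      (hΦ.differentiable (by simp) w) (hΦe w i)
    straight := fun _ hw i => ⟨_, fderiv_fderiv_reciprocalState_apply hw.1 (e i)⟩ }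

end Temple

section Decoupled

variable {ι V : Type*} [NormedAddCommGroup V] [NormedSpace ℝ V]

/-- The `i`-th coordinate functional of a basis, as a continuous linear map. -/
noncomputable def coordL [Finite ι] (e : Basis ι ℝ V) (i : ι) : V →L[ℝ] ℝ :=
  ContinuousLinearMap.proj i ∘L (e.equivFunL : V →L[ℝ] ι → ℝ)

lemma coordL_self [Finite ι] (e : Basis ι ℝ V) (i : ι) : coordL e i (e i) = 1 := by
  simp [coordL]

lemma coordL_of_ne [Finite ι] (e : Basis ι ℝ V) {i j : ι} (hij : i ≠ j) :
    coordL e i (e j) = 0 := by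
  simp [coordL, hij.symm]

/-- The flux of the decoupled system of scalar conservation laws `∂ₜ wᵢ + ∂ₓ φᵢ(wᵢ) = 0` for the
coordinates `wᵢ` of the state in the basis `e`. -/
noncomputable def decoupledFlux [Fintype ι] (e : Basis ι ℝ V) (φ : ι → ℝ → ℝ) (w : V) : V :=
  ∑ i, φ i (coordL e i w) • e i

variable [Fintype ι] (e : Basis ι ℝ V) {φ : ι → ℝ → ℝ} {φ' : ι → ℝ} {w : V}

lemma contDiff_decoupledFlux {n : ℕ∞ω} (hφ : ∀ i, ContDiff ℝ n (φ i)) :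
    ContDiff ℝ n (decoupledFlux e φ) :=
  ContDiff.sum fun i _ => ((hφ i).comp (coordL e i).contDiff).smul contDiff_const

lemma fderiv_decoupledFlux_basis (hφ : ∀ i, HasDerivAt (φ i) (φ' i) (coordL e i w)) (j : ι) :
    fderiv ℝ (decoupledFlux e φ) w (e j) = φ' j • e j := by
  have h : HasFDerivAt (decoupledFlux e φ) _ w := HasFDerivAt.fun_sum fun i _ =>
    ((hφ i).comp_hasFDerivAt w (coordL e i).hasFDerivAt).smul_const (e i)
  rw [h.fderiv, sum_apply,
    Finset.sum_eq_single_of_mem j (Finset.mem_univ j) fun i _ hij => by simp [coordL_of_ne e hij]]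
  simp [coordL_self]

end Decoupled

lemma hasDerivAt_linear_add_quadratic (a b t : ℝ) :
    HasDerivAt (fun t => a * t + b * t ^ 2 / 2) (a + b * t) t := by
  have h := ((hasDerivAt_id t).const_mul a).add
    ((((hasDerivAt_id t).pow 2).const_mul b).div_const 2)
  refine h.congr_deriv ?_
  simp only [id, Nat.cast_ofNat]
  ring

section Jets

variable {V : Type*} [NormedAddCommGroup V] [NormedSpace ℝ V]

theorem exists_isTempleSystemOn_hasFDerivAt_speed {ι : Type*} [Finite ι] [Preorder ι]
    (e : Basis ι ℝ V) {a : ι → ℝ} {A : ι → V →L[ℝ] ℝ} {ℓ : V →L[ℝ] ℝ}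
    (ha : StrictMono a) (hA : ∀ i j, i ≠ j → A i (e j) = (a i - a j) * ℓ (e j)) :
    ∃ (U : Set V) (u g : V → V) (mu : ι → V → ℝ), U ∈ 𝓝 0 ∧ IsTempleSystemOn e u g mu U ∧
      (∀ i, mu i 0 = a i) ∧ ∀ i, HasFDerivAt (mu i) (A i) 0 := by
  have := Fintype.ofFinite ι
  let φ (i : ι) (t : ℝ) : ℝ := a i * t + A i (e i) * t ^ 2 / 2
  let Φ : V → V := decoupledFlux e φ
  let m (i : ι) (w : V) : ℝ := a i + A i (e i) * coordL e i w
  have hΦ : ContDiff ℝ ∞ Φ := contDiff_decoupledFlux e fun i => by fun_prop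
  have hΦe (w : V) (i : ι) : fderiv ℝ Φ w (e i) = m i w • e i :=
    fderiv_decoupledFlux_basis e (fun i => hasDerivAt_linear_add_quadratic _ _ _) i
  have hΦ₀ : Φ 0 = 0 := by simp [Φ, φ, decoupledFlux]
  have hm₀ (i : ι) : m i 0 = a i := by simp [m]
  have hμ₀ (i : ι) : reciprocalSpeed ℓ Φ (m i) 0 = a i := by simp [reciprocalSpeed, hΦ₀, hm₀]
  have hT := isTempleSystemOn_reciprocal ℓ e.ne_zero hΦ
    (fun i => (by fun_prop : ContDiff ℝ ∞ (m i))) hΦe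
  refine ⟨_, _, _, _, hT.isOpen.mem_nhds ⟨by simp, by simpa only [hμ₀] using ha⟩, hT, hμ₀,
    fun i => ?_⟩
  have hm' : HasFDerivAt (m i) (A i (e i) • coordL e i) 0 :=
    ((coordL e i).hasFDerivAt.const_mul _).const_add _
  refine (hasFDerivAt_reciprocalSpeed (hΦ.differentiable (by simp) 0).hasFDerivAt
    hm').congr_fderiv (ContinuousLinearMap.coe_injective (e.ext fun j => ?_))
  suffices A i (e i) * coordL e i (e j) + a i * ℓ (e j) - a j * ℓ (e j) = A i (e j) by
    simpa [hΦe, hm₀] using this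
  obtain rfl | hij := eq_or_ne i j
  · rw [coordL_self]
    ring
  · rw [coordL_of_ne e hij, hA i j hij]
    ring

theorem stmt19_general (e : Basis (Fin 2) ℝ V) (a : Fin 2 → ℝ) (A : Fin 2 → V →L[ℝ] ℝ)
    (ha : a 0 < a 1) :
    ∃ (U : Set V) (u g : V → V) (mu : Fin 2 → V → ℝ), U ∈ 𝓝 0 ∧ IsTempleSystemOn e u g mu U ∧
      (∀ i, mu i 0 = a i) ∧ ∀ i, HasFDerivAt (mu i) (A i) 0 := by
  have hmono : StrictMono a := Fin.strictMono_iff_lt_succ.mpr (by simpa using ha)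
  refine exists_isTempleSystemOn_hasFDerivAt_speed e hmono
    (ℓ := e.constrL fun j => A j.rev (e j) / (a j.rev - a j)) fun i j hij => ?_
  have hrev : ∀ i j : Fin 2, i ≠ j → i = j.rev := by decide
  obtain rfl := hrev i j hij
  rw [e.constrL_basis, mul_div_cancel₀ _ (sub_ne_zero.mpr (hmono.injective.ne hij))]

end Jets

lemma coe_finTwoProd_eq_rc : ⇑(Basis.finTwoProd ℝ) = rc := by
  ext i <;> fin_cases i <;> simp [rc]

/-- Any strictly hyperbolic 2×2 system, written in Riemann coordinates with
characteristic speeds λᵢ(w₁,w₂), can be approximated to first order at the origin by a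
Temple class system: there is a system (given by a state map `uu` and a flux-in-coordinates
`g` with ∂g/∂wᵢ = μᵢ ∂uu/∂wᵢ) whose eigenvector integral curves are straight lines and whose
eigenvalues μᵢ match λᵢ together with all first derivatives at the origin. -/
theorem stmt19 (lam : Fin 2 → (ℝ × ℝ) → ℝ)
    (hsm : ∀ i, ContDiff ℝ (⊤ : ℕ∞) (lam i))
    (hsh : lam 0 (0, 0) < lam 1 (0, 0)) :
    ∃ (U : Set (ℝ × ℝ)) (uu g : (ℝ × ℝ) → ℝ × ℝ) (mu : Fin 2 → (ℝ × ℝ) → ℝ),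
      U ∈ nhds ((0, 0) : ℝ × ℝ) ∧ IsOpen U ∧
      ContDiffOn ℝ (⊤ : ℕ∞) uu U ∧ ContDiffOn ℝ (⊤ : ℕ∞) g U ∧ (∀ i, ContDiffOn ℝ (⊤ : ℕ∞) (mu i) U) ∧
      Set.InjOn uu U ∧
      (∀ w ∈ U, mu 0 w < mu 1 w) ∧
      (∀ w ∈ U, ∀ i, fderiv ℝ uu w (rc i) ≠ 0) ∧
      (∀ w ∈ U, ∀ i, fderiv ℝ g w (rc i) = mu i w • fderiv ℝ uu w (rc i)) ∧
      (∀ w ∈ U, ∀ i, ∃ κ : ℝ,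
        fderiv ℝ (fun z => fderiv ℝ uu z (rc i)) w (rc i) = κ • fderiv ℝ uu w (rc i)) ∧
      (∀ i, mu i (0, 0) = lam i (0, 0)) ∧
      (∀ i j, fderiv ℝ (mu i) (0, 0) (rc j) = fderiv ℝ (lam i) (0, 0) (rc j)) := by
  obtain ⟨U, u, g, mu, hU, h, hval, hder⟩ := stmt19_general (Basis.finTwoProd ℝ)
    (fun i => lam i (0, 0)) (fun i => fderiv ℝ (lam i) (0, 0)) hsh
  rw [coe_finTwoProd_eq_rc] at h
  exact ⟨U, u, g, mu, hU, h.isOpen, h.contDiffOn_state, h.contDiffOn_flux, h.contDiffOn_speed,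
    h.injOn_state, fun w hw => h.strictMono_speed w hw Fin.zero_lt_one, h.fderiv_state_ne_zero,
    h.fderiv_flux, h.straight, hval, fun i j => congrArg (· (rc j)) (hder i).fderiv⟩
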